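/- Let d ≥ 3, p ∈ (1,∞) with p' = p/(p−1), and μ ≥ 8d. Then there exist, for each j ∈ {1,…,d}, smooth zero-mean functions Φ_j^μ ∈ C_0^∞(𝕋^d), smooth zero-mean vector fields W_j^μ ∈ C_0^∞(𝕋^d;ℝ^d), and smooth vector fields Ω_j^μ ∈ C^∞(𝕋^d;ℝ^d) (the Mikado densities, fields, and potentials) such that: (i) for every r ∈ [1,∞] and m ∈ ℕ there are constants C_m, independent of μ, with ‖∇^m Φ_j^μ‖_{L^r} ≤ C_m μ^{m + (d−1)/p − (d−1)/r}, ‖∇^m Ω_j^μ‖_{L^r} ≤ C_m μ^{m − 1 + (d−1)/p − (d−1)/r}, and ‖∇^m W_j^μ‖_{L^r} ≤ C_m μ^{m + (d−1)/p' − (d−1)/r}; (ii) div(Φ_j^μ W_j^μ) = 0, div W_j^μ = 0, and div Ω_j^μ = Φ_j^μ; (iii) ∫_{𝕋^d} Φ_j^μ W_j^μ dx = e_j for all 1 ≤ j ≤ d, and Φ_j^μ W_k^μ ≡ 0 pointwise whenever j ≠ k, where e_j is the j-th standard Euclidean basis vector. -/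

import Mathlib

open MeasureTheory ENNReal

noncomputable section

/-- Points of `ℝ^d` (representing the torus `𝕋^d = ℝ^d/ℤ^d` via periodic functions). -/
abbrev Vec (d : ℕ) := Fin d → ℝ

/-- One fundamental domain `[0,1]^d` of the torus. -/
def fundCube (d : ℕ) : Set (Vec d) := Set.Icc 0 1

/-- `ℤ^d`-periodicity of a function on `ℝ^d`. -/
def ZPer {d : ℕ} {α : Type*} (f : Vec d → α) : Prop :=
  ∀ (x : Vec d) (k : Fin d → ℤ), f (x + fun i => (k i : ℝ)) = f x

/-- Generic `L^p` "norm" (`p ∈ [1,∞]` as `ℝ≥0∞`) of an `ℝ≥0∞`-valued function. -/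
def eLpGen {α : Type*} [MeasurableSpace α] (μ : Measure α) (p : ℝ≥0∞)
    (g : α → ℝ≥0∞) : ℝ≥0∞ :=
  if p = ∞ then essSup g μ
  else (∫⁻ a, g a ^ p.toReal ∂μ) ^ (1 / p.toReal)

/-- Spatial `L^p` norm over one fundamental domain of the torus. -/
def spLp {d : ℕ} {E : Type*} [NormedAddCommGroup E] (p : ℝ≥0∞)
    (f : Vec d → E) : ℝ≥0∞ :=
  eLpGen (volume.restrict (fundCube d)) p (fun x => (‖f x‖₊ : ℝ≥0∞))

/-- `W^{1,q}` norm of a vector field on the torus: `‖u‖_{L^q} + ‖∇u‖_{L^q}`. -/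
def W1qNorm {d : ℕ} (q : ℝ≥0∞) (u : Vec d → Vec d) : ℝ≥0∞ :=
  spLp q u + spLp q (fderiv ℝ u)

/-- `L^s(0,T;L^p(𝕋^d))` norm. -/
def LsLpT {d : ℕ} {E : Type*} [NormedAddCommGroup E] (T : ℝ) (s p : ℝ≥0∞)
    (f : ℝ → Vec d → E) : ℝ≥0∞ :=
  eLpGen (volume.restrict (Set.Ioo 0 T)) s (fun t => spLp p (f t))

/-- `L^s(0,T;W^{1,q}(𝕋^d))` norm. -/
def LsW1qT {d : ℕ} (T : ℝ) (s q : ℝ≥0∞) (u : ℝ → Vec d → Vec d) : ℝ≥0∞ :=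
  eLpGen (volume.restrict (Set.Ioo 0 T)) s (fun t => W1qNorm q (u t))

/-- Gradient of a scalar function on `ℝ^d`. -/
def gradV {d : ℕ} (f : Vec d → ℝ) (x : Vec d) : Vec d :=
  fun i => fderiv ℝ f x (Pi.single i 1)

/-- Divergence of a vector field on `ℝ^d`. -/
def divV {d : ℕ} (v : Vec d → Vec d) (x : Vec d) : ℝ :=
  ∑ i, fderiv ℝ (fun y => v y i) x (Pi.single i 1)

/-- Laplacian of a scalar function on `ℝ^d`. -/
def laplV {d : ℕ} (f : Vec d → ℝ) : Vec d → ℝ := divV (gradV f)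

/-- Euclidean dot product on `ℝ^d`. -/
def dotV {d : ℕ} (a b : Vec d) : ℝ := ∑ i, a i * b i

/-- `C^N` norm over one fundamental domain. -/
def CkN {d : ℕ} (N : ℕ) (φ : Vec d → ℝ) : ℝ :=
  ∑ i ∈ Finset.range (N + 1), sSup ((fun x => ‖iteratedFDeriv ℝ i φ x‖) '' fundCube d)

/-- `W^{m,r}` norm over one fundamental domain. -/
def SobN {d : ℕ} {E : Type*} [NormedAddCommGroup E] [NormedSpace ℝ E]
    (m : ℕ) (r : ℝ≥0∞) (f : Vec d → E) : ℝ≥0∞ :=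
  ∑ i ∈ Finset.range (m + 1), spLp r (iteratedFDeriv ℝ i f)

/-- Test functions for the weak formulation on `[0,T) × 𝕋^d`:
smooth, `ℤ^d`-periodic in space, vanishing for `t` near `T` (compact support in `[0,T)`). -/
def IsTest (d : ℕ) (T : ℝ) (φ : ℝ → Vec d → ℝ) : Prop :=
  ContDiff ℝ (⊤ : ℕ∞) (Function.uncurry φ) ∧ (∀ t, ZPer (φ t)) ∧
    ∃ T', T' < T ∧ ∀ t, T' ≤ t → ∀ x, φ t x = 0

/-- `ρ` is a weak solution on `(0,T) × 𝕋^d` of `∂_t ρ + u·∇ρ = 0` with initial data `ρ₀`. -/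
def IsWeakSolution (d : ℕ) (T : ℝ) (u : ℝ → Vec d → Vec d)
    (ρ : ℝ → Vec d → ℝ) (ρ₀ : Vec d → ℝ) : Prop :=
  ∀ φ : ℝ → Vec d → ℝ, IsTest d T φ →
    ∫ x in fundCube d, ρ₀ x * φ 0 x =
      ∫ t in Set.Ioo 0 T, ∫ x in fundCube d,
        ρ t x * (deriv (fun τ => φ τ x) t + fderiv ℝ (φ t) x (u t x))

/-- `u` is divergence free in the sense of distributions on `(0,T) × 𝕋^d`. -/
def WeaklyDivFree (d : ℕ) (T : ℝ) (u : ℝ → Vec d → Vec d) : Prop :=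
  ∀ φ : ℝ → Vec d → ℝ, ContDiff ℝ (⊤ : ℕ∞) (Function.uncurry φ) →
    (∀ t, ZPer (φ t)) →
    ∫ t in Set.Ioo 0 T, ∫ x in fundCube d, fderiv ℝ (φ t) x (u t x) = 0

end

/-!
A Mikado density is supported on a tube of radius `μ⁻¹` around a line parallel to `e_j` and does not
depend on `x j`. In the other coordinates it is a product of functions `ψ' (μ * (x i - a))`,
periodized, with `ψ` a bump function. The field is the same function times `e_j`, so both it and its
product with the density are constant along their own direction, hence divergence free. Since `ψ'`
has integral zero the means vanish, and integrating `ψ'` in one transverse coordinate yields the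
potential and gains a factor `μ⁻¹`. Each derivative costs a factor `μ`, and the tube has volume
comparable to `μ ^ (-(d - 1))`: this gives the `L^r` bounds, and normalizing `∫ ψ' ^ 2 = 1` turns
the integral of density times field into `e_j`. Finally, lines parallel to different axes have a
common transverse coordinate as soon as `3 ≤ d`; placing the `j`-th line at height `(j + 1 / 2) / d`
in every transverse coordinate makes the tubes disjoint.
-/

noncomputable section

open Function
open scoped ContDiff

section Periodize

/-- The `1`-periodic function that agrees with `f` on `[0, 1)`. -/
def periodize (f : ℝ → ℝ) (t : ℝ) : ℝ := f (Int.fract t)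

variable {f : ℝ → ℝ} (hf : tsupport f ⊆ Set.Ioo 0 1)
include hf

lemma periodize_eventuallyEq (t : ℝ) : periodize f =ᶠ[nhds t] fun s => f (s - ⌊t⌋) := by
  have hnext : Int.fract t + 1 ∉ tsupport f := fun h =>
    (hf h).2.not_ge (le_add_of_nonneg_left (Int.fract_nonneg t))
  have hzero : ∀ᶠ s in nhds t, f (s - ⌊t⌋ + 1) = 0 :=
    (continuous_id.sub continuous_const |>.add continuous_const).continuousAt.eventually
      (notMem_tsupport_iff_eventuallyEq.1 hnext)
  have hlower : (⌊t⌋ : ℝ) - 1 < t := by linarith [Int.floor_le t]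
  filter_upwards [hzero, Ioo_mem_nhds hlower (Int.lt_floor_add_one t)] with s hs ⟨hs₁, hs₂⟩
  rcases le_or_gt (⌊t⌋ : ℝ) s with hle | hlt
  · rw [periodize, Int.fract, Int.floor_eq_iff.2 ⟨hle, hs₂⟩]
  · have hfloor : ⌊s⌋ = ⌊t⌋ - 1 := by
      rw [Int.floor_eq_iff]; push_cast; constructor <;> linarith
    have hneg : s - ⌊t⌋ ∉ tsupport f := fun h => (sub_neg.2 hlt).not_gt (hf h).1
    rw [periodize, Int.fract, hfloor, image_eq_zero_of_notMem_tsupport hneg, Int.cast_sub,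
      Int.cast_one, sub_sub_eq_add_sub, add_sub_right_comm, hs]

lemma contDiff_periodize {n : ℕ∞ω} (hsmooth : ContDiff ℝ n f) : ContDiff ℝ n (periodize f) :=
  contDiff_iff_contDiffAt.2 fun t =>
    (hsmooth.comp (contDiff_id.sub contDiff_const)).contDiffAt.congr_of_eventuallyEq
      (periodize_eventuallyEq hf t)

lemma iteratedDeriv_periodize (k : ℕ) :
    iteratedDeriv k (periodize f) = periodize (iteratedDeriv k f) := by
  ext t
  rw [(periodize_eventuallyEq hf t).iteratedDeriv_eq, iteratedDeriv_comp_sub_const, periodize,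
    Int.fract]

lemma tsupport_periodize_subset : tsupport (periodize f) ⊆ Int.fract ⁻¹' tsupport f := by
  intro t
  contrapose!
  intro ht
  have hzero : ∀ᶠ s in nhds t, f (s - ⌊t⌋) = 0 :=
    (continuous_id.sub continuous_const).continuousAt.eventually
      (notMem_tsupport_iff_eventuallyEq.1 ht)
  exact notMem_tsupport_iff_eventuallyEq.2 ((periodize_eventuallyEq hf t).trans hzero)

lemma mem_tsupport_of_mem_tsupport_periodize {t : ℝ} (ht : t ∈ Set.Icc (0 : ℝ) 1)
    (hmem : t ∈ tsupport (periodize f)) : t ∈ tsupport f := by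
  have hfract : Int.fract t ∈ tsupport f := tsupport_periodize_subset hf hmem
  have hlt : t < 1 := ht.2.lt_of_ne fun h => by simpa [h] using hf hfract
  rwa [Int.fract_eq_self.2 ⟨ht.1, hlt⟩] at hfract

lemma setIntegral_periodize : ∫ t in Set.Icc (0 : ℝ) 1, periodize f t = ∫ t, f t := by
  have heq : Set.EqOn (periodize f) f (Set.Ico 0 1) := fun t ht =>
    congrArg f (Int.fract_eq_self.2 ht)
  rw [integral_Icc_eq_integral_Ico, setIntegral_congr_fun measurableSet_Ico heq]
  exact setIntegral_eq_integral_of_forall_compl_eq_zero fun t ht =>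
    image_eq_zero_of_notMem_tsupport fun h => ht (Set.Ioo_subset_Ico_self (hf h))

end Periodize

section Rescale

/-- The profile `h`, concentrated at scale `μ⁻¹` around the point `a`. -/
def rescale (μ a : ℝ) (h : ℝ → ℝ) (t : ℝ) : ℝ := h (μ * (t - a))

variable {μ a : ℝ} {h : ℝ → ℝ}

lemma iteratedDeriv_rescale (hh : ContDiff ℝ ∞ h) (k : ℕ) :
    iteratedDeriv k (rescale μ a h) = fun t => μ ^ k * rescale μ a (iteratedDeriv k h) t := by
  unfold rescale
  rw [iteratedDeriv_comp_sub_const (f := fun t => h (μ * t)),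
    iteratedDeriv_comp_const_mul (hh.of_le (by exact_mod_cast le_top))]

lemma integral_rescale (hμ : 0 < μ) : ∫ t, rescale μ a h t = μ⁻¹ * ∫ t, h t := by
  unfold rescale
  rw [integral_sub_right_eq_self (fun t => h (μ * t)), Measure.integral_comp_mul_left,
    abs_of_pos (inv_pos.2 hμ), smul_eq_mul]

lemma tsupport_rescale_subset (hμ : 0 < μ) {ρ : ℝ} (hh : tsupport h ⊆ Metric.closedBall 0 ρ) :
    tsupport (rescale μ a h) ⊆ Metric.closedBall a (ρ / μ) := by
  refine closure_minimal (fun t ht => ?_) Metric.isClosed_closedBall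
  have hmem : μ * (t - a) ∈ Metric.closedBall 0 ρ := hh (subset_tsupport h ht)
  rw [mem_closedBall_zero_iff, norm_mul, Real.norm_of_nonneg hμ.le] at hmem
  rwa [Metric.mem_closedBall, dist_eq_norm, le_div_iff₀' hμ]

end Rescale

section TensorProd

/-- The function `x ↦ ∏ i ∈ s, g i (x i)` of separated variables, which is constant in the
coordinates outside `s`. -/
def tensorProd {ι : Type*} (s : Finset ι) (g : ι → ℝ → ℝ) (x : ι → ℝ) : ℝ := ∏ i ∈ s, g i (x i)

variable {ι : Type*} {s : Finset ι} {g : ι → ℝ → ℝ}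

lemma tsupport_tensorProd_subset :
    tsupport (tensorProd s g) ⊆ (s : Set ι).pi fun i => tsupport (g i) :=
  closure_minimal (fun _ hx i hi => subset_tsupport _ (Finset.prod_ne_zero_iff.1 hx i hi))
    (isClosed_set_pi fun _ _ => isClosed_tsupport _)

lemma tensorProd_mul_tensorProd (g' : ι → ℝ → ℝ) (x : ι → ℝ) :
    tensorProd s g x * tensorProd s g' x = tensorProd s (fun i t => g i t * g' i t) x :=
  Finset.prod_mul_distrib.symm

lemma fderiv_tensorProd_single [Finite ι] [DecidableEq ι]
    (hg : ∀ i ∈ s, Differentiable ℝ (g i)) (x : ι → ℝ) (i : ι) :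
    fderiv ℝ (tensorProd s g) x (Pi.single i 1) =
      if i ∈ s then deriv (g i) (x i) * tensorProd (s.erase i) g x else 0 := by
  have := Fintype.ofFinite ι
  have hfactor : ∀ k ∈ s, HasFDerivAt (fun y : ι → ℝ => g k (y k))
      (deriv (g k) (x k) • ContinuousLinearMap.proj k) x := fun k hk =>
    HasDerivAt.comp_hasFDerivAt x (hg k hk (x k)).hasDerivAt
      (ContinuousLinearMap.proj (R := ℝ) (φ := fun _ : ι => ℝ) k).hasFDerivAt
  have hprod : HasFDerivAt (tensorProd s g) _ x := HasFDerivAt.finsetProd hfactor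
  rw [hprod.fderiv,
    ← Finset.sum_ite_eq' s i fun k => deriv (g k) (x k) * tensorProd (s.erase k) g x]
  simp only [FunLike.coe_sum, Finset.sum_apply, FunLike.coe_smul, Pi.smul_apply, smul_eq_mul,
    ContinuousLinearMap.proj_apply, Pi.single_apply]
  refine Finset.sum_congr rfl fun k _ => ?_
  split_ifs <;> simp [tensorProd, mul_comm]

variable [Fintype ι]

lemma contDiff_tensorProd {n : ℕ∞ω} (hg : ∀ i ∈ s, ContDiff ℝ n (g i)) :
    ContDiff ℝ n (tensorProd s g) :=
  contDiff_prod fun i hi => (hg i hi).comp (contDiff_apply ℝ ℝ i)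

lemma norm_iteratedFDeriv_comp_apply_le {φ : ℝ → ℝ} {k : ℕ} (hφ : ContDiff ℝ k φ) (i : ι)
    (x : ι → ℝ) :
    ‖iteratedFDeriv ℝ k (fun y : ι → ℝ => φ (y i)) x‖ ≤ |iteratedDeriv k φ (x i)| := by
  let π : (ι → ℝ) →L[ℝ] ℝ := ContinuousLinearMap.proj i
  have hπ : ‖π‖ ≤ 1 := π.opNorm_le_bound zero_le_one fun y =>
    (norm_le_pi_norm y i).trans_eq (one_mul _).symm
  calc ‖iteratedFDeriv ℝ k (φ ∘ π) x‖
      ≤ ‖iteratedFDeriv ℝ k φ (π x)‖ * ∏ _ : Fin k, ‖π‖ := by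
        rw [π.iteratedFDeriv_comp_right hφ x le_rfl]
        exact ContinuousMultilinearMap.norm_compContinuousLinearMap_le _ _
    _ ≤ ‖iteratedFDeriv ℝ k φ (π x)‖ :=
        mul_le_of_le_one_right (norm_nonneg _)
          (Finset.prod_le_one (fun _ _ => norm_nonneg _) fun _ _ => hπ)
    _ = |iteratedDeriv k φ (x i)| := norm_iteratedFDeriv_eq_norm_iteratedDeriv

lemma norm_iteratedFDeriv_tensorProd_le {m : ℕ} {M μ : ℝ} (hg : ∀ i ∈ s, ContDiff ℝ m (g i))
    (hbound : ∀ i ∈ s, ∀ k ≤ m, ∀ t, |iteratedDeriv k (g i) t| ≤ M * μ ^ k) (x : ι → ℝ) :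
    ‖iteratedFDeriv ℝ m (tensorProd s g) x‖ ≤ s.card ^ m * M ^ s.card * μ ^ m := by
  classical
  have hterm : ∀ q ∈ s.sym m, ∏ i ∈ s, ‖iteratedFDeriv ℝ ((q : Multiset ι).count i)
      (fun y : ι → ℝ => g i (y i)) x‖ ≤ M ^ s.card * μ ^ m := fun q hq => by
    have hcount (i : ι) : (q : Multiset ι).count i ≤ m :=
      (Multiset.count_le_card i _).trans_eq q.2
    have hsum : ∑ i ∈ s, (q : Multiset ι).count i = m :=
      (Multiset.sum_count_eq_card fun i hi => Finset.mem_sym_iff.1 hq i hi).trans q.2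
    calc ∏ i ∈ s, ‖iteratedFDeriv ℝ ((q : Multiset ι).count i) (fun y : ι → ℝ => g i (y i)) x‖
        ≤ ∏ i ∈ s, M * μ ^ (q : Multiset ι).count i :=
          Finset.prod_le_prod (fun _ _ => norm_nonneg _) fun i hi =>
            (norm_iteratedFDeriv_comp_apply_le
              ((hg i hi).of_le (by exact_mod_cast hcount i)) i x).trans
              (hbound i hi _ (hcount i) _)
      _ = M ^ s.card * μ ^ m := by
          rw [Finset.prod_mul_distrib, Finset.prod_const, Finset.prod_pow_eq_pow_sum, hsum]
  have hcountPerms : ∑ q ∈ s.sym m, ((q : Multiset ι).countPerms : ℝ) = s.card ^ m := by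
    simpa using (Finset.sum_pow (s := s) (fun _ => (1 : ℝ)) m).symm
  calc ‖iteratedFDeriv ℝ m (tensorProd s g) x‖
      ≤ ∑ q ∈ s.sym m, (q : Multiset ι).countPerms * ∏ i ∈ s,
          ‖iteratedFDeriv ℝ ((q : Multiset ι).count i) (fun y : ι → ℝ => g i (y i)) x‖ :=
        norm_iteratedFDeriv_prod_le (fun i hi => (hg i hi).comp (contDiff_apply ℝ ℝ i)) le_rfl
    _ ≤ ∑ q ∈ s.sym m, (q : Multiset ι).countPerms * (M ^ s.card * μ ^ m) :=
        Finset.sum_le_sum fun q hq => mul_le_mul_of_nonneg_left (hterm q hq) (Nat.cast_nonneg _)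
    _ = s.card ^ m * M ^ s.card * μ ^ m := by
        rw [← Finset.sum_mul, hcountPerms, mul_assoc]

end TensorProd

section Cube

variable {d : ℕ} {s : Finset (Fin d)}

lemma fundCube_eq_pi (d : ℕ) : fundCube d = Set.univ.pi fun _ => Set.Icc (0 : ℝ) 1 :=
  (Set.pi_univ_Icc 0 1).symm

lemma setIntegral_tensorProd (s : Finset (Fin d)) (g : Fin d → ℝ → ℝ) :
    ∫ x in fundCube d, tensorProd s g x = ∏ i ∈ s, ∫ t in Set.Icc (0 : ℝ) 1, g i t := by
  have hext (x : Vec d) : tensorProd s g x = ∏ i, (if i ∈ s then g i else 1) (x i) := by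
    rw [tensorProd, ← Finset.prod_ite_mem_eq]
    exact Finset.prod_congr rfl fun i _ => by split_ifs <;> rfl
  simp_rw [hext]
  rw [fundCube_eq_pi, volume_pi, Measure.restrict_pi_pi,
    integral_fintype_prod_eq_prod fun i => if i ∈ s then g i else 1,
    ← Finset.prod_ite_mem_eq s]
  exact Finset.prod_congr rfl fun i _ => by split_ifs <;> simp

lemma volume_pi_inter_fundCube_le (s : Finset (Fin d)) (B : Fin d → Set ℝ) :
    volume ((s : Set (Fin d)).pi B ∩ fundCube d) ≤ ∏ i ∈ s, volume (B i) := by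
  have hsubset : (s : Set (Fin d)).pi B ∩ fundCube d ⊆
      Set.univ.pi fun i => if i ∈ s then B i else Set.Icc 0 1 := fun x hx i _ => by
    dsimp only
    split_ifs with hi
    · exact hx.1 i hi
    · exact ⟨hx.2.1 i, hx.2.2 i⟩
  refine (measure_mono hsubset).trans_eq ?_
  rw [volume_pi_pi, ← Finset.prod_ite_mem_eq s]
  exact Finset.prod_congr rfl fun i _ => by split_ifs <;> simp

variable {E F : Type*} [NormedAddCommGroup E] [NormedAddCommGroup F]

lemma spLp_eq_eLpNorm {r : ℝ≥0∞} (hr : r ≠ 0) (f : Vec d → E) :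
    spLp r f = eLpNorm f r (volume.restrict (fundCube d)) := by
  rw [spLp, eLpGen, eLpNorm, if_neg hr]
  rfl

lemma spLp_le_of_norm_le {r : ℝ≥0∞} (hr : r ≠ 0) {f : Vec d → E} {K : ℝ}
    {T : Set (Vec d)} (hbound : ∀ x, ‖f x‖ ≤ K) (hsupport : support f ∩ fundCube d ⊆ T) :
    spLp r f ≤ ENNReal.ofReal K * volume (T ∩ fundCube d) ^ (1 / r).toReal := by
  have hK : 0 ≤ K := (norm_nonneg _).trans (hbound 0)
  have hdom : ∀ᵐ x ∂volume.restrict (fundCube d), ‖f x‖ ≤ ‖T.indicator (fun _ => K) x‖ := by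
    refine (ae_restrict_iff' measurableSet_Icc).2 (.of_forall fun x hx => ?_)
    by_cases hfx : f x = 0
    · simp only [hfx, norm_zero, norm_nonneg]
    · rw [Set.indicator_of_mem (hsupport ⟨hfx, hx⟩), Real.norm_of_nonneg hK]
      exact hbound x
  calc spLp r f = eLpNorm f r (volume.restrict (fundCube d)) := spLp_eq_eLpNorm hr f
    _ ≤ eLpNorm (T.indicator fun _ => K) r (volume.restrict (fundCube d)) := eLpNorm_mono_ae hdom
    _ ≤ ‖K‖ₑ * volume.restrict (fundCube d) T ^ (1 / r.toReal) := eLpNorm_indicator_const_le K r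
    _ = _ := by
      rw [Real.enorm_of_nonneg hK, fundCube, Measure.restrict_apply' measurableSet_Icc,
        ENNReal.toReal_div, ENNReal.toReal_one]

end Cube

section Profile

/-- A smooth transverse profile of a tube. The support lies in an interval of length `1`, so that
a tube with `d - 1` transverse profiles rescaled by `μ` has volume at most `μ ^ (-(d - 1))`. -/
structure IsProfile (h : ℝ → ℝ) : Prop where
  contDiff : ContDiff ℝ ∞ h
  tsupport_subset : tsupport h ⊆ Metric.closedBall 0 (1 / 2)

namespace IsProfile

variable {h : ℝ → ℝ} (hh : IsProfile h)
include hh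

lemma hasCompactSupport : HasCompactSupport h :=
  (isCompact_closedBall 0 (1 / 2)).of_isClosed_subset (isClosed_tsupport h) hh.tsupport_subset

lemma deriv : IsProfile (deriv h) where
  contDiff := (contDiff_infty_iff_deriv.1 hh.contDiff).2
  tsupport_subset := tsupport_deriv_subset.trans hh.tsupport_subset

lemma iteratedDeriv (k : ℕ) : IsProfile (iteratedDeriv k h) := by
  induction k with
  | zero => simpa only [iteratedDeriv_zero] using hh
  | succ k ih => simpa only [iteratedDeriv_succ] using ih.deriv

lemma mul {h' : ℝ → ℝ} (hh' : IsProfile h') : IsProfile fun t => h t * h' t where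
  contDiff := hh.contDiff.mul hh'.contDiff
  tsupport_subset := tsupport_mul_subset_left.trans hh.tsupport_subset

lemma integral_deriv : ∫ t, _root_.deriv h t = 0 :=
  integral_eq_zero_of_hasDerivAt_of_integrable
    (fun t => (hh.contDiff.differentiable (by simp) t).hasDerivAt)
    (hh.deriv.contDiff.continuous.integrable_of_hasCompactSupport hh.deriv.hasCompactSupport)
    (hh.contDiff.continuous.integrable_of_hasCompactSupport hh.hasCompactSupport)

lemma exists_iteratedDeriv_bound (m : ℕ) :
    ∃ M > 0, ∀ k ≤ m, ∀ t, |_root_.iteratedDeriv k h t| ≤ M := by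
  choose B hB using fun k =>
    (hh.iteratedDeriv k).contDiff.continuous.bounded_above_of_compact_support
      (hh.iteratedDeriv k).hasCompactSupport
  have hBnonneg (k : ℕ) : 0 ≤ B k := (norm_nonneg _).trans (hB k 0)
  refine ⟨∑ k ∈ Finset.range (m + 1), B k + 1,
    add_pos_of_nonneg_of_pos (Finset.sum_nonneg fun k _ => hBnonneg k) one_pos, fun k hk t => ?_⟩
  calc |_root_.iteratedDeriv k h t| ≤ B k := hB k t
    _ ≤ ∑ k ∈ Finset.range (m + 1), B k :=
        Finset.single_le_sum (fun k _ => hBnonneg k) (Finset.mem_range_succ_iff.2 hk)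
    _ ≤ _ := le_add_of_nonneg_right zero_le_one

end IsProfile

lemma exists_isProfile_deriv_ne_zero : ∃ ψ, IsProfile ψ ∧ ∃ t, deriv ψ t ≠ 0 := by
  let b : ContDiffBump (0 : ℝ) := ⟨1 / 4, 1 / 2, by norm_num, by norm_num⟩
  refine ⟨b, ⟨b.contDiff, b.tsupport_eq.subset⟩, ?_⟩
  by_contra! hderiv
  have hconst : b 0 = b 1 :=
    is_const_of_deriv_eq_zero ((b.contDiff (n := 1)).differentiable one_ne_zero) hderiv 0 1
  have hone : b 0 = 1 := b.one_of_mem_closedBall (Metric.mem_closedBall_self b.rIn_pos.le)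
  have hzero : b 1 = 0 := b.zero_of_le_dist <| by
    rw [dist_zero_right, norm_one]
    exact one_half_lt_one.le
  exact one_ne_zero (hone.symm.trans (hconst.trans hzero))

lemma exists_isProfile_integral_deriv_sq_eq_one :
    ∃ ψ, IsProfile ψ ∧ ∫ t, deriv ψ t * deriv ψ t = 1 := by
  obtain ⟨φ, hφ, t₀, ht₀⟩ := exists_isProfile_deriv_ne_zero
  have hsq := hφ.deriv.mul hφ.deriv
  have hK : 0 < ∫ t, deriv φ t * deriv φ t :=
    hsq.contDiff.continuous.integral_pos_of_hasCompactSupport_nonneg_nonzero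
      hsq.hasCompactSupport (fun t => mul_self_nonneg _) (mul_self_ne_zero.2 ht₀)
  set K := ∫ t, deriv φ t * deriv φ t
  refine ⟨fun t => (√K)⁻¹ * φ t, ⟨contDiff_const.mul hφ.contDiff,
    tsupport_mul_subset_right.trans hφ.tsupport_subset⟩, ?_⟩
  have hscale (t : ℝ) : deriv (fun t => (√K)⁻¹ * φ t) t * deriv (fun t => (√K)⁻¹ * φ t) t =
      K⁻¹ * (deriv φ t * deriv φ t) := by
    rw [deriv_const_mul_field', mul_mul_mul_comm, ← mul_inv, Real.mul_self_sqrt hK.le]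
  simp_rw [hscale, integral_const_mul]
  exact inv_mul_cancel₀ hK.ne'

end Profile

section Tube

/-- The transverse coordinate of the axis of the `j`-th tube: the midpoint of the `j`-th of the `d`
equal cells of `[0, 1]`. -/
def tubeCenter {d : ℕ} (j : Fin d) : ℝ := (j + 1 / 2) / d

/-- The factor of the `j`-th tube in one transverse coordinate. -/
def tubeFactor {d : ℕ} (μ : ℝ) (j : Fin d) (h : ℝ → ℝ) : ℝ → ℝ :=
  periodize (rescale μ (tubeCenter j) h)

/-- The `ℤ^d`-periodic function of amplitude `μ ^ s` that is constant in the direction `e_j` and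
concentrated within distance `μ⁻¹` of the line in that direction through
`(tubeCenter j, …, tubeCenter j)` and its integer translates; `h i` is the
profile in the coordinate `i ≠ j`. -/
def tube {d : ℕ} (μ s : ℝ) (j : Fin d) (h : Fin d → ℝ → ℝ) (x : Vec d) : ℝ :=
  μ ^ s * tensorProd (Finset.univ.erase j) (fun i => tubeFactor μ j (h i)) x

variable {d : ℕ} {μ : ℝ} {j : Fin d}

lemma pos_of_natCast_lt (hμ : (d : ℝ) < μ) : 0 < μ := d.cast_nonneg.trans_lt hμ

lemma closedBall_tubeCenter_subset (hμ : (d : ℝ) < μ) (j : Fin d) :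
    Metric.closedBall (tubeCenter j) (1 / 2 / μ) ⊆ Set.Ioo ((j : ℝ) / d) ((j + 1) / d) := by
  have hd : (0 : ℝ) < d := Nat.cast_pos.2 j.pos
  have hradius : 1 / 2 / μ < 1 / 2 / d := div_lt_div_of_pos_left one_half_pos hd hμ
  have hleft : tubeCenter j - 1 / 2 / d = j / d := by rw [tubeCenter]; ring
  have hright : tubeCenter j + 1 / 2 / d = (j + 1) / d := by rw [tubeCenter]; ring
  rw [Real.closedBall_eq_Icc, ← hleft, ← hright]
  exact Set.Icc_subset_Ioo (by linarith) (by linarith)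

lemma cell_subset_Ioo (j : Fin d) : Set.Ioo ((j : ℝ) / d) ((j + 1) / d) ⊆ Set.Ioo 0 1 := by
  have hd : (0 : ℝ) < d := Nat.cast_pos.2 j.pos
  refine Set.Ioo_subset_Ioo (by positivity) ((div_le_one hd).2 ?_)
  exact_mod_cast j.isLt

lemma disjoint_cell {j k : Fin d} (hjk : j ≠ k) :
    Disjoint (Set.Ioo ((j : ℝ) / d) ((j + 1) / d)) (Set.Ioo ((k : ℝ) / d) ((k + 1) / d)) := by
  have hd : (0 : ℝ) < d := Nat.cast_pos.2 j.pos
  have hfloor {i : Fin d} {t : ℝ} (ht : t ∈ Set.Ioo ((i : ℝ) / d) ((i + 1) / d)) :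
      ⌊t * d⌋ = (i : ℤ) :=
    Int.floor_eq_iff.2 ⟨by exact_mod_cast ((div_lt_iff₀ hd).1 ht.1).le,
      by exact_mod_cast (lt_div_iff₀ hd).1 ht.2⟩
  refine Set.disjoint_left.2 fun t hj hk => hjk (Fin.ext ?_)
  exact_mod_cast (hfloor hj).symm.trans (hfloor hk)

section Factor

variable {h h' : ℝ → ℝ}

lemma tubeFactor_mul_tubeFactor (t : ℝ) :
    tubeFactor μ j h t * tubeFactor μ j h' t = tubeFactor μ j (fun s => h s * h' s) t := rfl

lemma tsupport_rescale_tubeCenter_subset (hμ : (d : ℝ) < μ) (hh : IsProfile h) (j : Fin d) :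
    tsupport (rescale μ (tubeCenter j) h) ⊆ Set.Ioo ((j : ℝ) / d) ((j + 1) / d) :=
  (tsupport_rescale_subset (pos_of_natCast_lt hμ) hh.tsupport_subset).trans
    (closedBall_tubeCenter_subset hμ j)

lemma tsupport_rescale_tubeCenter_subset_Ioo (hμ : (d : ℝ) < μ) (hh : IsProfile h) (j : Fin d) :
    tsupport (rescale μ (tubeCenter j) h) ⊆ Set.Ioo 0 1 :=
  (tsupport_rescale_tubeCenter_subset hμ hh j).trans (cell_subset_Ioo j)

lemma contDiff_tubeFactor (hμ : (d : ℝ) < μ) (hh : IsProfile h) (j : Fin d) :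
    ContDiff ℝ ∞ (tubeFactor μ j h) :=
  contDiff_periodize (tsupport_rescale_tubeCenter_subset_Ioo hμ hh j)
    (hh.contDiff.comp (contDiff_const.mul (contDiff_id.sub contDiff_const)))

lemma iteratedDeriv_tubeFactor (hμ : (d : ℝ) < μ) (hh : IsProfile h) (j : Fin d) (k : ℕ) :
    iteratedDeriv k (tubeFactor μ j h) = fun t => μ ^ k * tubeFactor μ j (iteratedDeriv k h) t := by
  rw [tubeFactor, iteratedDeriv_periodize (tsupport_rescale_tubeCenter_subset_Ioo hμ hh j),
    iteratedDeriv_rescale hh.contDiff]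
  rfl

lemma deriv_tubeFactor (hμ : (d : ℝ) < μ) (hh : IsProfile h) (j : Fin d) :
    deriv (tubeFactor μ j h) = fun t => μ * tubeFactor μ j (deriv h) t := by
  simpa only [iteratedDeriv_one, pow_one] using iteratedDeriv_tubeFactor hμ hh j 1

lemma setIntegral_tubeFactor (hμ : (d : ℝ) < μ) (hh : IsProfile h) (j : Fin d) :
    ∫ t in Set.Icc (0 : ℝ) 1, tubeFactor μ j h t = μ⁻¹ * ∫ t, h t := by
  rw [tubeFactor, setIntegral_periodize (tsupport_rescale_tubeCenter_subset_Ioo hμ hh j),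
    integral_rescale (pos_of_natCast_lt hμ)]

lemma mem_closedBall_of_mem_tsupport_tubeFactor (hμ : (d : ℝ) < μ) (hh : IsProfile h) {t : ℝ}
    (ht : t ∈ Set.Icc (0 : ℝ) 1) (hmem : t ∈ tsupport (tubeFactor μ j h)) :
    t ∈ Metric.closedBall (tubeCenter j) (1 / 2 / μ) :=
  tsupport_rescale_subset (pos_of_natCast_lt hμ) hh.tsupport_subset
    (mem_tsupport_of_mem_tsupport_periodize (tsupport_rescale_tubeCenter_subset_Ioo hμ hh j) ht
      hmem)

lemma tubeFactor_mul_tubeFactor_of_ne (hμ : (d : ℝ) < μ) (hh : IsProfile h) (hh' : IsProfile h')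
    {j k : Fin d} (hjk : j ≠ k) (t : ℝ) : tubeFactor μ j h t * tubeFactor μ k h' t = 0 := by
  refine mul_eq_zero.2 (or_iff_not_imp_left.2 fun hj => ?_)
  by_contra hk
  exact Set.disjoint_left.1 (disjoint_cell hjk)
    (tsupport_rescale_tubeCenter_subset hμ hh j (subset_tsupport _ hj))
    (tsupport_rescale_tubeCenter_subset hμ hh' k (subset_tsupport _ hk))

end Factor

variable {s : ℝ} {h h' : Fin d → ℝ → ℝ}

lemma contDiff_tube (hμ : (d : ℝ) < μ) (hh : ∀ i, IsProfile (h i)) (s : ℝ) (j : Fin d) :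
    ContDiff ℝ ∞ (tube μ s j h) :=
  contDiff_const.mul (contDiff_tensorProd fun i _ => contDiff_tubeFactor hμ (hh i) j)

lemma zPer_tube (μ s : ℝ) (j : Fin d) (h : Fin d → ℝ → ℝ) : ZPer (tube μ s j h) := fun x k => by
  simp only [tube, tensorProd, tubeFactor, periodize, Pi.add_apply, Int.fract_add_intCast]

lemma tube_mul_tube (hμ : 0 < μ) (s t : ℝ) (j : Fin d) (h h' : Fin d → ℝ → ℝ) (x : Vec d) :
    tube μ s j h x * tube μ t j h' x = tube μ (s + t) j (fun i r => h i r * h' i r) x := by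
  simp only [tube, Real.rpow_add hμ, mul_mul_mul_comm, tensorProd_mul_tensorProd,
    tubeFactor_mul_tubeFactor]

lemma tube_mul_tube_of_ne (hd : 3 ≤ d) (hμ : (d : ℝ) < μ) (hh : ∀ i, IsProfile (h i))
    (hh' : ∀ i, IsProfile (h' i)) (s t : ℝ) {j k : Fin d} (hjk : j ≠ k) (x : Vec d) :
    tube μ s j h x * tube μ t k h' x = 0 := by
  obtain ⟨i, hi⟩ : ∃ i, i ∉ ({j, k} : Finset (Fin d)) := by
    by_contra! hall
    have hcard := Finset.card_le_card (Finset.subset_iff.2 fun i _ => hall i : Finset.univ ⊆ {j, k})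
    rw [Finset.card_fin] at hcard
    exact absurd (hcard.trans Finset.card_le_two) (by lia)
  simp only [Finset.mem_insert, Finset.mem_singleton, not_or] at hi
  have hfactor := tubeFactor_mul_tubeFactor_of_ne hμ (hh i) (hh' i) hjk (x i)
  rw [tube, tube, mul_mul_mul_comm, mul_eq_zero]
  refine .inr ((mul_eq_zero.1 hfactor).elim (fun hj => ?_) fun hk => ?_)
  · exact mul_eq_zero_of_left
      (Finset.prod_eq_zero (Finset.mem_erase.2 ⟨hi.1, Finset.mem_univ i⟩) hj) _
  · exact mul_eq_zero_of_right _
      (Finset.prod_eq_zero (Finset.mem_erase.2 ⟨hi.2, Finset.mem_univ i⟩) hk)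

lemma fderiv_tube_single (hμ : (d : ℝ) < μ) (hh : ∀ i, IsProfile (h i)) (s : ℝ) (i j : Fin d)
    (x : Vec d) : fderiv ℝ (tube μ s j h) x (Pi.single i 1) =
      μ ^ s * if i ∈ Finset.univ.erase j then deriv (tubeFactor μ j (h i)) (x i) *
        tensorProd ((Finset.univ.erase j).erase i) (fun k => tubeFactor μ j (h k)) x else 0 := by
  have hg : ∀ i ∈ Finset.univ.erase j, ContDiff ℝ ∞ (tubeFactor μ j (h i)) :=
    fun i _ => contDiff_tubeFactor hμ (hh i) j
  unfold tube
  rw [fderiv_const_mul ((contDiff_tensorProd hg).differentiable (by simp) x), FunLike.coe_smul,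
    Pi.smul_apply, fderiv_tensorProd_single fun i hi => (hg i hi).differentiable (by simp),
    smul_eq_mul]

lemma fderiv_tube_self (hμ : (d : ℝ) < μ) (hh : ∀ i, IsProfile (h i)) (s : ℝ) (j : Fin d)
    (x : Vec d) : fderiv ℝ (tube μ s j h) x (Pi.single j 1) = 0 := by
  rw [fderiv_tube_single hμ hh, if_neg (Finset.notMem_erase j _), mul_zero]

lemma fderiv_tube_of_ne (hμ : (d : ℝ) < μ) (hh : ∀ i, IsProfile (h i)) (s : ℝ) {i : Fin d}
    (hij : i ≠ j) (x : Vec d) : fderiv ℝ (tube μ s j h) x (Pi.single i 1) =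
      tube μ (s + 1) j (update h i (deriv (h i))) x := by
  have hi : i ∈ Finset.univ.erase j := Finset.mem_erase.2 ⟨hij, Finset.mem_univ i⟩
  have hrest : ∏ k ∈ (Finset.univ.erase j).erase i,
      tubeFactor μ j (update h i (deriv (h i)) k) (x k) =
        ∏ k ∈ (Finset.univ.erase j).erase i, tubeFactor μ j (h k) (x k) :=
    Finset.prod_congr rfl fun k hk => by simp only [update_of_ne (Finset.ne_of_mem_erase hk)]
  rw [fderiv_tube_single hμ hh, if_pos hi, deriv_tubeFactor hμ (hh i), tube, tensorProd, tensorProd,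
    ← Finset.mul_prod_erase _ _ hi, hrest, update_self,
    Real.rpow_add_one (pos_of_natCast_lt hμ).ne']
  ring

lemma rpow_mul_inv_pow_pred (hd : 0 < d) (hμ : 0 < μ) (s : ℝ) :
    μ ^ s * μ⁻¹ ^ (d - 1) = μ ^ (s - (d - 1)) := by
  rw [← Nat.cast_pred hd, Real.rpow_sub hμ, Real.rpow_natCast, inv_pow, div_eq_mul_inv]

lemma setIntegral_tube (hμ : (d : ℝ) < μ) (hh : ∀ i, IsProfile (h i)) (s : ℝ) (j : Fin d) :
    ∫ x in fundCube d, tube μ s j h x =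
      μ ^ (s - (d - 1)) * ∏ i ∈ Finset.univ.erase j, ∫ t, h i t := by
  simp only [tube, integral_const_mul, setIntegral_tensorProd, setIntegral_tubeFactor hμ (hh _),
    Finset.prod_mul_distrib, Finset.prod_const, Finset.card_erase_of_mem (Finset.mem_univ j),
    Finset.card_fin]
  rw [← mul_assoc, rpow_mul_inv_pow_pred j.pos (pos_of_natCast_lt hμ)]

lemma volume_tubeSupport_le (μ : ℝ) (j : Fin d) :
    volume (((Finset.univ.erase j : Finset (Fin d)) : Set (Fin d)).pi
      (fun _ => Metric.closedBall (tubeCenter j) (1 / 2 / μ)) ∩ fundCube d) ≤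
      ENNReal.ofReal μ⁻¹ ^ (d - 1) := by
  refine (volume_pi_inter_fundCube_le _ _).trans_eq ?_
  rw [Finset.prod_const, Finset.card_erase_of_mem (Finset.mem_univ j), Finset.card_fin,
    Real.volume_closedBall, show 2 * (1 / 2 / μ) = μ⁻¹ by ring]

lemma tsupport_tube_inter_fundCube_subset (hμ : (d : ℝ) < μ) (hh : ∀ i, IsProfile (h i)) :
    tsupport (tube μ s j h) ∩ fundCube d ⊆
      ((Finset.univ.erase j : Finset (Fin d)) : Set (Fin d)).pi fun _ =>
        Metric.closedBall (tubeCenter j) (1 / 2 / μ) := fun _ ⟨hx, hcube⟩ i hi =>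
  mem_closedBall_of_mem_tsupport_tubeFactor hμ (hh i) ⟨hcube.1 i, hcube.2 i⟩
    (tsupport_tensorProd_subset (tsupport_mul_subset_right hx) i hi)

lemma norm_iteratedFDeriv_tube_le (hμ : (d : ℝ) < μ) (hh : ∀ i, IsProfile (h i)) {m : ℕ} {M : ℝ}
    (hM : ∀ i, ∀ k ≤ m, ∀ t, |iteratedDeriv k (h i) t| ≤ M) (s : ℝ) (j : Fin d) (x : Vec d) :
    ‖iteratedFDeriv ℝ m (tube μ s j h) x‖ ≤ (d - 1) ^ m * M ^ (d - 1) * μ ^ (m + s) := by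
  have hμ₀ := pos_of_natCast_lt hμ
  have hsmooth (i : Fin d) : ContDiff ℝ m (tubeFactor μ j (h i)) :=
    (contDiff_tubeFactor hμ (hh i) j).of_le (by exact_mod_cast le_top)
  have hfactor : ∀ i ∈ Finset.univ.erase j, ∀ k ≤ m, ∀ t,
      |iteratedDeriv k (tubeFactor μ j (h i)) t| ≤ M * μ ^ k := fun i _ k hk t => by
    rw [iteratedDeriv_tubeFactor hμ (hh i), abs_mul, abs_of_pos (pow_pos hμ₀ k), mul_comm]
    exact mul_le_mul_of_nonneg_right (hM i k hk _) (pow_pos hμ₀ k).le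
  have hprod := norm_iteratedFDeriv_tensorProd_le (fun i _ => hsmooth i) hfactor x
  rw [Finset.card_erase_of_mem (Finset.mem_univ j), Finset.card_fin, Nat.cast_pred j.pos] at hprod
  calc ‖iteratedFDeriv ℝ m (tube μ s j h) x‖
      = μ ^ s * ‖iteratedFDeriv ℝ m
          (tensorProd (Finset.univ.erase j) fun i => tubeFactor μ j (h i)) x‖ := by
        change ‖iteratedFDeriv ℝ m (μ ^ s • tensorProd (Finset.univ.erase j)
          fun i => tubeFactor μ j (h i)) x‖ = _
        rw [iteratedFDeriv_const_smul_apply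
          (contDiff_tensorProd fun i _ => hsmooth i).contDiffAt, norm_smul,
          Real.norm_of_nonneg (Real.rpow_nonneg hμ₀.le s)]
    _ ≤ μ ^ s * ((d - 1) ^ m * M ^ (d - 1) * μ ^ m) :=
        mul_le_mul_of_nonneg_left hprod (Real.rpow_nonneg hμ₀.le s)
    _ = (d - 1) ^ m * M ^ (d - 1) * μ ^ (m + s) := by
        rw [Real.rpow_add hμ₀, Real.rpow_natCast]
        ring

lemma spLp_iteratedFDeriv_tube_le (hμ : (d : ℝ) < μ) (hh : ∀ i, IsProfile (h i)) {m : ℕ} {M : ℝ}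
    (hM : ∀ i, ∀ k ≤ m, ∀ t, |iteratedDeriv k (h i) t| ≤ M) {r : ℝ≥0∞} (hr : r ≠ 0) (s : ℝ)
    (j : Fin d) : spLp r (iteratedFDeriv ℝ m (tube μ s j h)) ≤
      ENNReal.ofReal ((d - 1) ^ m * M ^ (d - 1) * μ ^ (m + s - (d - 1) * (1 / r).toReal)) := by
  have hμ₀ := pos_of_natCast_lt hμ
  have hsupport : support (iteratedFDeriv ℝ m (tube μ s j h)) ∩ fundCube d ⊆ _ :=
    (Set.inter_subset_inter_left _ (support_iteratedFDeriv_subset m)).trans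
      (tsupport_tube_inter_fundCube_subset hμ hh)
  have hvolume : (ENNReal.ofReal μ⁻¹ ^ (d - 1)) ^ (1 / r).toReal =
      ENNReal.ofReal (μ ^ (-((d - 1) * (1 / r).toReal))) := by
    rw [← Nat.cast_pred j.pos, ← ENNReal.rpow_natCast, ← ENNReal.rpow_mul,
      ENNReal.ofReal_rpow_of_pos (inv_pos.2 hμ₀), Real.inv_rpow hμ₀.le, Real.rpow_neg hμ₀.le]
  calc spLp r (iteratedFDeriv ℝ m (tube μ s j h))
      ≤ ENNReal.ofReal ((d - 1) ^ m * M ^ (d - 1) * μ ^ (m + s)) *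
          (ENNReal.ofReal μ⁻¹ ^ (d - 1)) ^ (1 / r).toReal :=
        (spLp_le_of_norm_le hr (norm_iteratedFDeriv_tube_le hμ hh hM s j) hsupport).trans <|
          mul_le_mul_right (ENNReal.rpow_le_rpow (volume_tubeSupport_le μ j) toReal_nonneg) _
    _ = _ := by
        rw [hvolume, ← ENNReal.ofReal_mul' (Real.rpow_nonneg hμ₀.le _), mul_assoc,
          ← Real.rpow_add hμ₀, ← sub_eq_add_neg]

end Tube

section AxisField

variable {d : ℕ}

/-- The vector field of magnitude `f` pointing in the coordinate direction `e_i`. -/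
def axisField (i : Fin d) (f : Vec d → ℝ) (x : Vec d) : Vec d := f x • Pi.single i 1

lemma contDiff_axisField {n : ℕ∞ω} {f : Vec d → ℝ} (hf : ContDiff ℝ n f) (i : Fin d) :
    ContDiff ℝ n (axisField i f) :=
  hf.smul contDiff_const

lemma zPer_axisField {f : Vec d → ℝ} (hf : ZPer f) (i : Fin d) : ZPer (axisField i f) :=
  fun x k => congrArg (· • Pi.single i 1) (hf x k)

lemma setIntegral_axisField (i : Fin d) (f : Vec d → ℝ) :
    ∫ x in fundCube d, axisField i f x = Pi.single i (∫ x in fundCube d, f x) := by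
  unfold axisField
  rw [integral_smul_const, ← Pi.single_smul, smul_eq_mul, mul_one]

lemma divV_axisField (i : Fin d) (f : Vec d → ℝ) (x : Vec d) :
    divV (axisField i f) x = fderiv ℝ f x (Pi.single i 1) := by
  rw [divV, Finset.sum_eq_single_of_mem i (Finset.mem_univ i) fun k _ hki => ?_]
  · simp only [axisField, Pi.smul_apply, Pi.single_eq_same, smul_eq_mul, mul_one]
  · simp only [axisField, Pi.smul_apply, Pi.single_eq_of_ne hki, smul_zero,
      fderiv_const_apply, FunLike.coe_zero, Pi.zero_apply]

lemma norm_iteratedFDeriv_axisField {m : ℕ} {f : Vec d → ℝ} (hf : ContDiff ℝ m f) (i : Fin d)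
    (x : Vec d) : ‖iteratedFDeriv ℝ m (axisField i f) x‖ = ‖iteratedFDeriv ℝ m f x‖ := by
  have hunit : ‖(Pi.single i 1 : Vec d)‖ = 1 := by rw [Pi.norm_single, norm_one]
  exact (LinearIsometry.toSpanSingleton ℝ (Vec d) hunit).norm_iteratedFDeriv_comp_left
    hf.contDiffAt le_rfl

lemma spLp_iteratedFDeriv_axisField {m : ℕ} {f : Vec d → ℝ} (hf : ContDiff ℝ m f) (i : Fin d)
    (r : ℝ≥0∞) :
    spLp r (iteratedFDeriv ℝ m (axisField i f)) = spLp r (iteratedFDeriv ℝ m f) := by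
  have hnnnorm (x : Vec d) :
      ‖iteratedFDeriv ℝ m (axisField i f) x‖₊ = ‖iteratedFDeriv ℝ m f x‖₊ :=
    NNReal.eq (norm_iteratedFDeriv_axisField hf i x)
  simp only [spLp, hnnnorm]

end AxisField

section Mikado

/-- The Mikado density `Φ_j` with generating profile `ψ`, of amplitude `μ ^ s`. -/
def mikadoDensity {d : ℕ} (ψ : ℝ → ℝ) (μ s : ℝ) (j : Fin d) : Vec d → ℝ :=
  tube μ s j fun _ => deriv ψ

/-- The Mikado field `W_j`, directed along its own tube. -/
def mikadoField {d : ℕ} (ψ : ℝ → ℝ) (μ t : ℝ) (j : Fin d) : Vec d → Vec d :=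
  axisField j (mikadoDensity ψ μ t j)

/-- The Mikado potential `Ω_j`: the density `Φ_j` integrated in one transverse coordinate `i ≠ j`,
in which the profile `deriv ψ` is replaced by `ψ`. -/
def mikadoPotential {d : ℕ} (ψ : ℝ → ℝ) (μ s : ℝ) (j i : Fin d) : Vec d → Vec d :=
  axisField i (tube μ (s - 1) j (update (fun _ => deriv ψ) i ψ))

variable {d : ℕ} {μ : ℝ} {ψ : ℝ → ℝ}

lemma isProfile_update_deriv (hψ : IsProfile ψ) (i k : Fin d) :
    IsProfile (update (fun _ => deriv ψ) i ψ k) := by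
  rcases eq_or_ne k i with rfl | hki
  · rwa [update_self]
  · rw [update_of_ne hki]
    exact hψ.deriv

lemma contDiff_mikadoDensity (hμ : (d : ℝ) < μ) (hψ : IsProfile ψ) (s : ℝ) (j : Fin d) :
    ContDiff ℝ ∞ (mikadoDensity ψ μ s j) :=
  contDiff_tube hμ (fun _ => hψ.deriv) s j

lemma zPer_mikadoDensity (ψ : ℝ → ℝ) (μ s : ℝ) (j : Fin d) : ZPer (mikadoDensity ψ μ s j) :=
  zPer_tube μ s j _

lemma setIntegral_mikadoDensity (hd : 2 ≤ d) (hμ : (d : ℝ) < μ) (hψ : IsProfile ψ) (s : ℝ)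
    (j : Fin d) : ∫ x in fundCube d, mikadoDensity ψ μ s j x = 0 := by
  rw [mikadoDensity, setIntegral_tube hμ fun _ => hψ.deriv, hψ.integral_deriv, Finset.prod_const,
    Finset.card_erase_of_mem (Finset.mem_univ j), Finset.card_fin, zero_pow (by lia), mul_zero]

lemma setIntegral_mikadoField (hd : 2 ≤ d) (hμ : (d : ℝ) < μ) (hψ : IsProfile ψ) (t : ℝ)
    (j : Fin d) : ∫ x in fundCube d, mikadoField ψ μ t j x = 0 := by
  rw [mikadoField, setIntegral_axisField, setIntegral_mikadoDensity hd hμ hψ, Pi.single_zero]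

lemma divV_mikadoField (hμ : (d : ℝ) < μ) (hψ : IsProfile ψ) (t : ℝ) (j : Fin d) (x : Vec d) :
    divV (mikadoField ψ μ t j) x = 0 := by
  rw [mikadoField, divV_axisField]
  exact fderiv_tube_self hμ (fun _ => hψ.deriv) t j x

lemma divV_mikadoPotential (hμ : (d : ℝ) < μ) (hψ : IsProfile ψ) (s : ℝ) {i j : Fin d}
    (hij : i ≠ j) (x : Vec d) :
    divV (mikadoPotential ψ μ s j i) x = mikadoDensity ψ μ s j x := by
  rw [mikadoPotential, divV_axisField,
    fderiv_tube_of_ne hμ (isProfile_update_deriv hψ i) _ hij, update_self, update_idem,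
    update_eq_self i fun _ => deriv ψ, sub_add_cancel, mikadoDensity]

lemma mikadoDensity_smul_mikadoField (hμ : 0 < μ) (ψ : ℝ → ℝ) (s t : ℝ) (j : Fin d) :
    (fun x => mikadoDensity ψ μ s j x • mikadoField ψ μ t j x) =
      axisField j (tube μ (s + t) j fun _ r => deriv ψ r * deriv ψ r) := by
  ext1 x
  rw [mikadoField, axisField, smul_smul, mikadoDensity, mikadoDensity, tube_mul_tube hμ,
    axisField]

lemma divV_mikadoDensity_smul_mikadoField (hμ : (d : ℝ) < μ) (hψ : IsProfile ψ) (s t : ℝ)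
    (j : Fin d) (x : Vec d) :
    divV (fun y => mikadoDensity ψ μ s j y • mikadoField ψ μ t j y) x = 0 := by
  rw [mikadoDensity_smul_mikadoField (pos_of_natCast_lt hμ), divV_axisField]
  exact fderiv_tube_self hμ (fun _ => hψ.deriv.mul hψ.deriv) (s + t) j x

lemma setIntegral_mikadoDensity_smul_mikadoField (hμ : (d : ℝ) < μ) (hψ : IsProfile ψ)
    (hnorm : ∫ r, deriv ψ r * deriv ψ r = 1) {s t : ℝ} (hst : s + t = d - 1) (j : Fin d) :
    ∫ x in fundCube d, mikadoDensity ψ μ s j x • mikadoField ψ μ t j x = Pi.single j 1 := by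
  rw [mikadoDensity_smul_mikadoField (pos_of_natCast_lt hμ), setIntegral_axisField,
    setIntegral_tube hμ fun _ => hψ.deriv.mul hψ.deriv, hst, sub_self, Real.rpow_zero, hnorm,
    Finset.prod_const_one, mul_one]

lemma mikadoDensity_smul_mikadoField_of_ne (hd : 3 ≤ d) (hμ : (d : ℝ) < μ) (hψ : IsProfile ψ)
    (s t : ℝ) {j k : Fin d} (hjk : j ≠ k) (x : Vec d) :
    mikadoDensity ψ μ s j x • mikadoField ψ μ t k x = 0 := by
  have hmul : mikadoDensity ψ μ s j x * mikadoDensity ψ μ t k x = 0 :=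
    tube_mul_tube_of_ne hd hμ (fun _ => hψ.deriv) (fun _ => hψ.deriv) s t hjk x
  rw [mikadoField, axisField, smul_smul, hmul, zero_smul]

section Estimates

variable {m : ℕ} {M : ℝ} {r : ℝ≥0∞}

lemma spLp_iteratedFDeriv_mikadoDensity_le (hμ : (d : ℝ) < μ) (hψ : IsProfile ψ)
    (hM : ∀ k ≤ m + 1, ∀ t, |iteratedDeriv k ψ t| ≤ M) (hr : r ≠ 0) (s : ℝ) (j : Fin d) :
    spLp r (iteratedFDeriv ℝ m (mikadoDensity ψ μ s j)) ≤
      ENNReal.ofReal ((d - 1) ^ m * M ^ (d - 1) * μ ^ (m + s - (d - 1) * (1 / r).toReal)) :=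
  spLp_iteratedFDeriv_tube_le hμ (fun _ => hψ.deriv)
    (fun _ k hk t => by
      rw [← iteratedDeriv_succ']
      exact hM _ (Nat.succ_le_succ hk) t) hr s j

lemma spLp_iteratedFDeriv_mikadoField_le (hμ : (d : ℝ) < μ) (hψ : IsProfile ψ)
    (hM : ∀ k ≤ m + 1, ∀ t, |iteratedDeriv k ψ t| ≤ M) (hr : r ≠ 0) (t : ℝ) (j : Fin d) :
    spLp r (iteratedFDeriv ℝ m (mikadoField ψ μ t j)) ≤
      ENNReal.ofReal ((d - 1) ^ m * M ^ (d - 1) * μ ^ (m + t - (d - 1) * (1 / r).toReal)) := by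
  rw [mikadoField, spLp_iteratedFDeriv_axisField
    ((contDiff_mikadoDensity hμ hψ t j).of_le (by exact_mod_cast le_top))]
  exact spLp_iteratedFDeriv_mikadoDensity_le hμ hψ hM hr t j

lemma spLp_iteratedFDeriv_mikadoPotential_le (hμ : (d : ℝ) < μ) (hψ : IsProfile ψ)
    (hM : ∀ k ≤ m + 1, ∀ t, |iteratedDeriv k ψ t| ≤ M) (hr : r ≠ 0) (s : ℝ) (j i : Fin d) :
    spLp r (iteratedFDeriv ℝ m (mikadoPotential ψ μ s j i)) ≤
      ENNReal.ofReal ((d - 1) ^ m * M ^ (d - 1) *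
        μ ^ (m - 1 + s - (d - 1) * (1 / r).toReal)) := by
  have hprofile (k : Fin d) : ∀ n ≤ m, ∀ t,
      |iteratedDeriv n (update (fun _ => deriv ψ) i ψ k) t| ≤ M := fun n hn t => by
    rcases eq_or_ne k i with rfl | hki
    · rw [update_self]
      exact hM n (hn.trans m.le_succ) t
    · rw [update_of_ne hki, ← iteratedDeriv_succ']
      exact hM _ (Nat.succ_le_succ hn) t
  rw [mikadoPotential, spLp_iteratedFDeriv_axisField
    ((contDiff_tube hμ (isProfile_update_deriv hψ i) _ j).of_le (by exact_mod_cast le_top)),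
    sub_add_eq_add_sub, add_sub_assoc (m : ℝ) s 1]
  exact spLp_iteratedFDeriv_tube_le hμ (isProfile_update_deriv hψ i) hprofile hr (s - 1) j

end Estimates

end Mikado

theorem mikado_flows_general (d : ℕ) (hd : 3 ≤ d) (s t : ℝ) (hst : s + t = d - 1) :
    ∃ C : ℕ → ℝ, (∀ m, 0 < C m) ∧
      ∀ μ : ℝ, (d : ℝ) < μ →
        ∃ (Φ : Fin d → Vec d → ℝ) (W Ω : Fin d → Vec d → Vec d),
          (∀ j, ContDiff ℝ ∞ (Φ j) ∧ ZPer (Φ j) ∧ (∫ x in fundCube d, Φ j x) = 0) ∧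
          (∀ j, ContDiff ℝ ∞ (W j) ∧ ZPer (W j) ∧ (∫ x in fundCube d, W j x) = 0) ∧
          (∀ j, ContDiff ℝ ∞ (Ω j) ∧ ZPer (Ω j)) ∧
          (∀ (m : ℕ) (r : ℝ≥0∞), r ≠ 0 → ∀ j,
            spLp r (iteratedFDeriv ℝ m (Φ j)) ≤
              ENNReal.ofReal (C m * μ ^ ((m : ℝ) + s - (d - 1) * (1 / r).toReal)) ∧
            spLp r (iteratedFDeriv ℝ m (Ω j)) ≤
              ENNReal.ofReal (C m * μ ^ ((m : ℝ) - 1 + s - (d - 1) * (1 / r).toReal)) ∧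
            spLp r (iteratedFDeriv ℝ m (W j)) ≤
              ENNReal.ofReal (C m * μ ^ ((m : ℝ) + t - (d - 1) * (1 / r).toReal))) ∧
          (∀ j x, divV (fun y => Φ j y • W j y) x = 0) ∧
          (∀ j x, divV (W j) x = 0) ∧
          (∀ j x, divV (Ω j) x = Φ j x) ∧
          (∀ j, (∫ x in fundCube d, Φ j x • W j x) = Pi.single j 1) ∧
          (∀ j k, j ≠ k → ∀ x, Φ j x • W k x = 0) := by
  obtain ⟨ψ, hψ, hnorm⟩ := exists_isProfile_integral_deriv_sq_eq_one
  choose M hMpos hM using fun m => hψ.exists_iteratedDeriv_bound (m + 1)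
  have : Nontrivial (Fin d) := Fin.nontrivial_iff_two_le.2 (by lia)
  choose i hi using fun j : Fin d => exists_ne j
  have hd₁ : (0 : ℝ) < d - 1 := sub_pos.2 (by exact_mod_cast (by lia : 1 < d))
  refine ⟨fun m => (d - 1) ^ m * M m ^ (d - 1),
    fun m => mul_pos (pow_pos hd₁ m) (pow_pos (hMpos m) _), fun μ hμ => ?_⟩
  have hΦ := contDiff_mikadoDensity hμ hψ
  exact ⟨mikadoDensity ψ μ s, mikadoField ψ μ t, fun j => mikadoPotential ψ μ s j (i j),
    fun j => ⟨hΦ s j, zPer_mikadoDensity ψ μ s j, setIntegral_mikadoDensity (by lia) hμ hψ s j⟩,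
    fun j => ⟨contDiff_axisField (hΦ t j) j, zPer_axisField (zPer_mikadoDensity ψ μ t j) j,
      setIntegral_mikadoField (by lia) hμ hψ t j⟩,
    fun j => ⟨contDiff_axisField (contDiff_tube hμ (isProfile_update_deriv hψ (i j)) _ j) (i j),
      zPer_axisField (zPer_tube μ _ j _) (i j)⟩,
    fun m r hr j => ⟨spLp_iteratedFDeriv_mikadoDensity_le hμ hψ (hM m) hr s j,
      spLp_iteratedFDeriv_mikadoPotential_le hμ hψ (hM m) hr s j (i j),
      spLp_iteratedFDeriv_mikadoField_le hμ hψ (hM m) hr t j⟩,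
    divV_mikadoDensity_smul_mikadoField hμ hψ s t,
    divV_mikadoField hμ hψ t,
    fun j => divV_mikadoPotential hμ hψ s (hi j),
    setIntegral_mikadoDensity_smul_mikadoField hμ hψ hnorm hst,
    fun _ _ => mikadoDensity_smul_mikadoField_of_ne hd hμ hψ s t⟩

end

/-- **Mikado flows** (Proposition 2.5 / [CL21, Prop. 4.3, Thm. 4.4]): for `d ≥ 3`,
`p ∈ (1,∞)` with conjugate `p'`, there are constants `C m r` (independent of `μ`)
such that for every `μ ≥ 8d` there exist Mikado densities `Φ_j^μ`, Mikado fields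
`W_j^μ` (smooth, periodic, zero mean) and potentials `Ω_j^μ` satisfying the
`L^r` estimates (i), the equations (ii) `div(Φ_j W_j) = 0`, `div W_j = 0`,
`div Ω_j = Φ_j`, and the normalization/disjointness (iii)
`∫ Φ_j W_j = e_j` and `Φ_j W_k ≡ 0` for `j ≠ k`. -/
theorem mikado_flows (d : ℕ) (hd : 3 ≤ d)
    (p : ℝ) (hp : 1 < p) (p' : ℝ) (hp' : p' = p / (p - 1)) :
    ∃ C : ℕ → ℝ≥0∞ → ℝ, (∀ m r, 0 < C m r) ∧
      ∀ μ : ℝ, 8 * (d : ℝ) ≤ μ →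
        ∃ (Φ : Fin d → Vec d → ℝ) (W Ω : Fin d → Vec d → Vec d),
          (∀ j, ContDiff ℝ (⊤ : ℕ∞) (Φ j) ∧ ZPer (Φ j) ∧
            (∫ x in fundCube d, Φ j x) = 0) ∧
          (∀ j, ContDiff ℝ (⊤ : ℕ∞) (W j) ∧ ZPer (W j) ∧
            (∫ x in fundCube d, W j x) = 0) ∧
          (∀ j, ContDiff ℝ (⊤ : ℕ∞) (Ω j) ∧ ZPer (Ω j)) ∧
          -- (i) L^r estimates, constants independent of μ
          (∀ (m : ℕ) (r : ℝ≥0∞), 1 ≤ r → ∀ j,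
            spLp r (iteratedFDeriv ℝ m (Φ j))
              ≤ ENNReal.ofReal (C m r *
                  μ ^ ((m : ℝ) + (d - 1) / p - (d - 1) * (1 / r).toReal)) ∧
            spLp r (iteratedFDeriv ℝ m (Ω j))
              ≤ ENNReal.ofReal (C m r *
                  μ ^ ((m : ℝ) - 1 + (d - 1) / p - (d - 1) * (1 / r).toReal)) ∧
            spLp r (iteratedFDeriv ℝ m (W j))
              ≤ ENNReal.ofReal (C m r *
                  μ ^ ((m : ℝ) + (d - 1) / p' - (d - 1) * (1 / r).toReal))) ∧
          -- (ii) equations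
          (∀ j x, divV (fun y => Φ j y • W j y) x = 0) ∧
          (∀ j x, divV (W j) x = 0) ∧
          (∀ j x, divV (Ω j) x = Φ j x) ∧
          -- (iii) normalization and disjointness
          (∀ j, (∫ x in fundCube d, Φ j x • W j x) = Pi.single j 1) ∧
          (∀ j k, j ≠ k → ∀ x, Φ j x • W k x = 0) := by
  obtain ⟨C, hC, hflows⟩ := mikado_flows_general d hd ((d - 1) / p) ((d - 1) / p')
    (by rw [hp']; field_simp; ring)
  have hd₀ : (3 : ℝ) ≤ d := by exact_mod_cast hd
  refine ⟨fun m _ => C m, fun m _ => hC m, fun μ hμ => ?_⟩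
  obtain ⟨Φ, W, Ω, hΦ, hW, hΩ, hbounds, hrest⟩ := hflows μ (by linarith)
  exact ⟨Φ, W, Ω, hΦ, hW, hΩ, fun m r hr => hbounds m r (one_pos.trans_le hr).ne', hrest⟩
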